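/- For every natural number n, the identity A_{(2);n} · A_{(2);n} = A_{(1,1);n} + 3·A_{(3);n} + 2·A_{(2,2);n} holds in the algebra B_n. -/

import Mathlib

/-! The proof compares coefficients: the coefficient of a partial permutation `c` in
`A {2} n * A {2} n` is the number of pairs `(p, q)` of partial transpositions (partial
permutations of cycle type `(2)`) with `p * q = c`.

A partial transposition is `T x y`, the transposition of two points `x ≠ y` supported on `{x, y}`.
In a product `T a b * T c d` the sets `{a, b}` and `{c, d}` share two, one or no points, and the
product then has cycle type `(1,1)`, `(3)` or `(2,2)` (`pCycleType_T_mul_T`); hence other `c` have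
coefficient `0`. Every `c` of one of these types is such a product, and its factorizations can be
listed: `(E, 1)` with `E = {x, y}` is only `T x y * T x y`; the three-cycle `T x y * T y z` is also
`T y z * T z x` and `T z x * T x y`; and `T x y * T z w` with four distinct points is also
`T z w * T x y`. This gives the coefficients `1`, `3` and `2`. -/

/-- A *partial permutation* of `{0, …, n-1}` (modeled as `Fin n`): a pair `(E, f)`
where `E` is a finite subset (the *support*) and `f` is a permutation fixing
every point outside `E`. -/
structure PartialPerm (n : ℕ) where
  support : Finset (Fin n)
  perm : Equiv.Perm (Fin n)
  fixes : ∀ x : Fin n, x ∉ support → perm x = x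

namespace PartialPerm

theorem ext' {n : ℕ} {a b : PartialPerm n} (h1 : a.support = b.support)
    (h2 : a.perm = b.perm) : a = b := by
  cases a; cases b; simp_all

/-- The monoid structure: `(E₁,f₁)·(E₂,f₂) = (E₁ ∪ E₂, f₁ ∘ f₂)`, with identity `(∅, id)`. -/
instance (n : ℕ) : Monoid (PartialPerm n) where
  mul a b := ⟨a.support ∪ b.support, a.perm * b.perm, fun x hx => by
    simp only [Finset.mem_union, not_or] at hx
    simp [Equiv.Perm.mul_apply, b.fixes x hx.2, a.fixes x hx.1]⟩
  one := ⟨∅, 1, fun _ _ => rfl⟩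
  mul_assoc a b c := ext' (Finset.union_assoc _ _ _) (mul_assoc _ _ _)
  one_mul a := ext' (Finset.empty_union _) (one_mul _)
  mul_one a := ext' (Finset.union_empty _) (mul_one _)

noncomputable instance (n : ℕ) : Fintype (PartialPerm n) :=
  Fintype.ofInjective (fun a => (a.support, a.perm))
    (fun _ _ h => ext' (congrArg Prod.fst h) (congrArg Prod.snd h))

/-- The conjugation action of `S_n` on partial permutations:
`v • (E, f) = (v E, v ∘ f ∘ v⁻¹)`. -/
def conj {n : ℕ} (v : Equiv.Perm (Fin n)) (a : PartialPerm n) : PartialPerm n :=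
  ⟨a.support.image v, v * a.perm * v⁻¹, fun x hx => by
    have h : v.symm x ∉ a.support := fun hmem =>
      hx (Finset.mem_image.mpr ⟨v.symm x, hmem, v.apply_symm_apply x⟩)
    simp [Equiv.Perm.mul_apply, Equiv.Perm.inv_def, a.fixes _ h]⟩

instance (n : ℕ) : SMul (Equiv.Perm (Fin n)) (PartialPerm n) := ⟨conj⟩

@[simp] theorem smul_support {n : ℕ} (v : Equiv.Perm (Fin n)) (a : PartialPerm n) :
    (v • a).support = a.support.image v := rfl

@[simp] theorem smul_perm {n : ℕ} (v : Equiv.Perm (Fin n)) (a : PartialPerm n) :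
    (v • a).perm = v * a.perm * v⁻¹ := rfl

instance (n : ℕ) : MulAction (Equiv.Perm (Fin n)) (PartialPerm n) where
  one_smul a := ext' (by simp) (by simp)
  mul_smul v w a := ext'
    (by rw [smul_support, smul_support, smul_support, Finset.image_image, ← Equiv.Perm.coe_mul])
    (by simp only [smul_perm]; group)

/-- The cycle type of a partial permutation `(E, f)`: the cycle lengths (≥ 2) of `f`,
together with one part `1` for each fixed point of `f` inside `E`.  It is a partition
of `|E|`. -/
def pCycleType {n : ℕ} (a : PartialPerm n) : Multiset ℕ :=
  a.perm.cycleType + Multiset.replicate (a.support.card - a.perm.support.card) 1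

/-- `A Δ n` : the sum, in the monoid algebra `B_n = ℂ[P_n]`, of all partial
permutations of cycle type `Δ` (zero if there are none, e.g. when `|Δ| > n`). -/
noncomputable def A (Δ : Multiset ℕ) (n : ℕ) : MonoidAlgebra ℂ (PartialPerm n) :=
  ∑ a : PartialPerm n, if pCycleType a = Δ then MonoidAlgebra.single a (1 : ℂ) else 0

end PartialPerm

/-! ### Partial transpositions and their products -/

namespace PartialPerm

variable {n : ℕ}

/-- The transposition of `x` and `y` supported on `{x, y}`; a partial transposition if `x ≠ y`. -/
def T (x y : Fin n) : PartialPerm n :=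
  ⟨{x, y}, Equiv.swap x y, fun z hz => by
    simp only [Finset.mem_insert, Finset.mem_singleton, not_or] at hz
    exact Equiv.swap_apply_of_ne_of_ne hz.1 hz.2⟩

@[simp] theorem mul_support (a b : PartialPerm n) :
    (a * b).support = a.support ∪ b.support := rfl

@[simp] theorem mul_perm (a b : PartialPerm n) : (a * b).perm = a.perm * b.perm := rfl

@[simp] theorem T_support (x y : Fin n) : (T x y).support = {x, y} := rfl

@[simp] theorem T_perm (x y : Fin n) : (T x y).perm = Equiv.swap x y := rfl

theorem T_comm (x y : Fin n) : T x y = T y x :=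
  ext' (Finset.pair_comm _ _) (Equiv.swap_comm _ _)

theorem perm_support_subset (a : PartialPerm n) : a.perm.support ⊆ a.support := by
  intro x hx
  by_contra h
  exact Equiv.Perm.mem_support.1 hx (a.fixes x h)

theorem one_notMem_cycleType (f : Equiv.Perm (Fin n)) : 1 ∉ f.cycleType := fun h => by
  have := Equiv.Perm.two_le_of_mem_cycleType h
  omega

/-- A cycle type without parts `1` forces the support to be the set of moved points. -/
theorem pCycleType_eq_iff {Δ : Multiset ℕ} (hΔ : 1 ∉ Δ) (a : PartialPerm n) :
    pCycleType a = Δ ↔ a.support = a.perm.support ∧ a.perm.cycleType = Δ := by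
  constructor
  · rintro rfl
    have h0 : a.support.card - a.perm.support.card = 0 := by
      by_contra h
      exact hΔ (Multiset.mem_add.2 (Or.inr (Multiset.mem_replicate.2 ⟨h, rfl⟩)))
    refine ⟨(Finset.eq_of_subset_of_card_le (perm_support_subset a) (by omega)).symm, ?_⟩
    simp [pCycleType, h0]
  · rintro ⟨h1, h2⟩
    simp [pCycleType, h1, h2]

/-! ### The cycle types `(2)`, `(1,1)`, `(3)` and `(2,2)` -/

theorem pCycleType_two (a : PartialPerm n) :
    pCycleType a = {2} ↔ ∃ x y, x ≠ y ∧ a = T x y := by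
  rw [pCycleType_eq_iff (by simp), ← Equiv.Perm.isSwap_iff_cycleType]
  constructor
  · rintro ⟨h1, x, y, hxy, h2⟩
    exact ⟨x, y, hxy, ext' (by rw [h1, h2, Equiv.Perm.support_swap hxy]; rfl) h2⟩
  · rintro ⟨x, y, hxy, rfl⟩
    exact ⟨(Equiv.Perm.support_swap hxy).symm, x, y, hxy, rfl⟩

theorem pCycleType_one_one (a : PartialPerm n) :
    pCycleType a = {1, 1} ↔ ∃ x y, x ≠ y ∧ a = T x y * T x y := by
  constructor
  · intro h
    have h1 : a.perm = 1 := by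
      rw [← Equiv.Perm.cycleType_eq_zero, Multiset.eq_zero_iff_forall_notMem]
      intro k hk
      have hk1 : k ∈ ({1, 1} : Multiset ℕ) := h ▸ Multiset.mem_add.2 (Or.inl hk)
      obtain rfl : k = 1 := by simpa using hk1
      exact one_notMem_cycleType _ hk
    have h2 : a.support.card = 2 := by
      simpa [pCycleType, h1] using congrArg Multiset.card h
    obtain ⟨x, y, hxy, h3⟩ := Finset.card_eq_two.1 h2
    exact ⟨x, y, hxy, ext' (by simp [h3]) (by simp [h1])⟩
  · rintro ⟨x, y, hxy, rfl⟩
    simp [pCycleType, Finset.card_pair hxy]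

theorem pCycleType_three (a : PartialPerm n) :
    pCycleType a = {3} ↔ ∃ x y z, x ≠ y ∧ y ≠ z ∧ x ≠ z ∧ a = T x y * T y z := by
  rw [pCycleType_eq_iff (by simp)]
  constructor
  · rintro ⟨h1, h2⟩
    have h3 : a.perm.IsThreeCycle := h2
    obtain ⟨x, hx⟩ : a.perm.support.Nonempty := by
      rw [← Finset.card_pos, h3.card_support]; norm_num
    have hn := h3.nodup_iff_mem_support.2 hx
    have hs := h3.support_eq_iff_mem_support.2 hx
    refine ⟨x, a.perm x, a.perm (a.perm x), by grind, by grind, by grind, ext' ?_ ?_⟩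
    · rw [h1, hs]; ext; simp
    · exact h3.eq_swap_mul_swap_iff_mem_support.2 hx
  · rintro ⟨x, y, z, hxy, hyz, hxz, rfl⟩
    have h3 : (T x y * T y z).perm.IsThreeCycle := by
      simpa [Equiv.swap_comm x y] using
        Equiv.Perm.isThreeCycle_swap_mul_swap_same hxy.symm hyz hxz
    refine ⟨(Finset.eq_of_subset_of_card_le (perm_support_subset _) ?_).symm, h3⟩
    rw [h3.card_support]
    have : (T x y * T y z).support = {x, y, z} := by ext; simp
    rw [this]
    exact Finset.card_le_three

theorem pCycleType_two_two (a : PartialPerm n) :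
    pCycleType a = {2, 2} ↔ ∃ x y z w, [x, y, z, w].Nodup ∧ a = T x y * T z w := by
  rw [pCycleType_eq_iff (by simp)]
  constructor
  · rintro ⟨h1, h2⟩
    obtain ⟨c, τ, h, hd, hc, hc2⟩ := Equiv.Perm.mem_cycleType_iff.1
      (show 2 ∈ a.perm.cycleType by simp [h2])
    have hτ : τ.cycleType = {2} := by
      rw [h, hd.cycleType_mul, hc.cycleType, hc2] at h2
      exact (Multiset.cons_inj_right 2).1 h2
    obtain ⟨x, y, hxy, rfl⟩ := Equiv.Perm.card_support_eq_two.1 hc2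
    obtain ⟨z, w, hzw, rfl⟩ := Equiv.Perm.isSwap_iff_cycleType.2 hτ
    have hs := hd.card_support_mul
    have hdj := Equiv.Perm.disjoint_iff_disjoint_support.1 hd
    rw [Equiv.Perm.support_swap hxy, Equiv.Perm.support_swap hzw] at hdj
    refine ⟨x, y, z, w, ?_, ext' ?_ h⟩
    · simp at hdj
      grind
    · rw [h1, h, hd.support_mul, Equiv.Perm.support_swap hxy, Equiv.Perm.support_swap hzw]
      rfl
  · rintro ⟨x, y, z, w, hn, rfl⟩
    refine ⟨?_, Equiv.Perm.cycleType_swap_mul_swap_of_nodup hn⟩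
    have hd := Equiv.Perm.disjoint_swap_swap hn
    rw [mul_perm, T_perm, T_perm, hd.support_mul, Equiv.Perm.support_swap (by grind),
      Equiv.Perm.support_swap (by grind)]
    rfl

theorem pCycleType_T_mul_T {a b c d : Fin n} (hab : a ≠ b) (hcd : c ≠ d) :
    pCycleType (T a b * T c d) = {1, 1} ∨ pCycleType (T a b * T c d) = {3} ∨
      pCycleType (T a b * T c d) = {2, 2} := by
  rw [pCycleType_one_one, pCycleType_three, pCycleType_two_two]
  by_cases hac : a = c
  · subst hac
    by_cases hbd : b = d
    · subst hbd
      exact Or.inl ⟨a, b, hab, rfl⟩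
    · exact Or.inr (Or.inl ⟨b, a, d, hab.symm, hcd, hbd, by rw [T_comm a b]⟩)
  by_cases had : a = d
  · subst had
    by_cases hbc : b = c
    · subst hbc
      exact Or.inl ⟨a, b, hab, by rw [T_comm b a]⟩
    · exact Or.inr (Or.inl ⟨b, a, c, hab.symm, hac, hbc, by rw [T_comm a b, T_comm c a]⟩)
  by_cases hbc : b = c
  · subst hbc
    exact Or.inr (Or.inl ⟨a, b, d, hab, hcd, had, rfl⟩)
  by_cases hbd : b = d
  · subst hbd
    exact Or.inr (Or.inl ⟨a, b, c, hab, hbc, hac, by rw [T_comm c b]⟩)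
  exact Or.inr (Or.inr ⟨a, b, c, d, by grind, rfl⟩)

/-! ### Counting factorizations -/

open Classical in
/-- The factorizations of `c` into two partial transpositions. -/
noncomputable def factorizations (c : PartialPerm n) : Finset (PartialPerm n × PartialPerm n) :=
  {p | (pCycleType p.1 = {2} ∧ pCycleType p.2 = {2}) ∧ p.1 * p.2 = c}

theorem mem_factorizations {c : PartialPerm n} {p : PartialPerm n × PartialPerm n} :
    p ∈ factorizations c ↔ ∃ a b d e, a ≠ b ∧ d ≠ e ∧ p = (T a b, T d e) ∧ T a b * T d e = c := by
  simp only [factorizations, Finset.mem_filter, Finset.mem_univ, true_and, pCycleType_two]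
  constructor
  · rintro ⟨⟨⟨a, b, hab, h1⟩, d, e, hde, h2⟩, h⟩
    exact ⟨a, b, d, e, hab, hde, Prod.ext h1 h2, h1 ▸ h2 ▸ h⟩
  · rintro ⟨a, b, d, e, hab, hde, rfl, h⟩
    exact ⟨⟨⟨a, b, hab, rfl⟩, d, e, hde, rfl⟩, h⟩

/-- A three-cycle written from any of its points: this rotates `(x y z)` to `(y z x)`. -/
theorem T_mul_T_rotate {x y z : Fin n} (hxy : x ≠ y) (hyz : y ≠ z) (hxz : x ≠ z) :
    T y z * T z x = T x y * T y z := by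
  refine ext' ?_ ?_
  · ext; simp; tauto
  · ext t
    simp only [mul_perm, T_perm, Equiv.Perm.mul_apply, Equiv.swap_apply_def]
    grind

theorem T_mul_T_comm {x y z w : Fin n} (h : [x, y, z, w].Nodup) :
    T z w * T x y = T x y * T z w :=
  ext' (Finset.union_comm _ _) (Equiv.Perm.disjoint_swap_swap h).commute.eq.symm

theorem T_ne {x y z w : Fin n} (h : z ≠ x ∧ z ≠ y) : T x y ≠ T z w := by
  intro he
  have := congrArg (z ∈ ·.support) he
  simp at this
  tauto

theorem card_factorizations_one_one {c : PartialPerm n} (h : pCycleType c = {1, 1}) :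
    (factorizations c).card = 1 := by
  obtain ⟨x, y, hxy, rfl⟩ := (pCycleType_one_one c).1 h
  rw [Finset.card_eq_one]
  refine ⟨(T x y, T x y), ?_⟩
  ext p
  rw [mem_factorizations, Finset.mem_singleton]
  constructor
  · rintro ⟨a, b, d, e, hab, hde, rfl, he⟩
    have hs := congrArg support he
    simp only [mul_support, T_support, Finset.union_self] at hs
    have key : ∀ u v : Fin n, u ≠ v → u ∈ ({x, y} : Finset (Fin n)) →
        v ∈ ({x, y} : Finset (Fin n)) → T u v = T x y := by
      intro u v huv hu hv
      simp only [Finset.mem_insert, Finset.mem_singleton] at hu hv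
      have := T_comm x y
      grind
    rw [key a b hab (by simp [← hs]) (by simp [← hs]),
      key d e hde (by simp [← hs]) (by simp [← hs])]
  · rintro rfl
    exact ⟨x, y, x, y, hxy, hxy, rfl, rfl⟩

theorem card_factorizations_three {c : PartialPerm n} (h : pCycleType c = {3}) :
    (factorizations c).card = 3 := by
  classical
  obtain ⟨x, y, z, hxy, hyz, hxz, rfl⟩ := (pCycleType_three c).1 h
  have n1 : T x y ≠ T z x := T_ne ⟨hxz.symm, hyz.symm⟩
  have n2 : T x y ≠ T y z := by
    rw [T_comm y z]; exact T_ne ⟨hxz.symm, hyz.symm⟩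
  have n3 : T y z ≠ T z x := by
    rw [T_comm z x]; exact T_ne ⟨hxy, hxz⟩
  rw [Finset.card_eq_three]
  refine ⟨(T x y, T y z), (T y z, T z x), (T z x, T x y), by simp [n2], by simp [n1],
    by simp [n3], ?_⟩
  ext p
  simp only [mem_factorizations, Finset.mem_insert, Finset.mem_singleton]
  constructor
  · rintro ⟨a, b, d, e, hab, hde, rfl, he⟩
    have hs' : ({a, b} ∪ {d, e} : Finset (Fin n)) = {x, y, z} := by
      rw [← T_support a b, ← T_support d e, ← mul_support, he]
      ext; simp
    have key : ∀ u v : Fin n, u ≠ v → u ∈ ({x, y, z} : Finset (Fin n)) →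
        v ∈ ({x, y, z} : Finset (Fin n)) → T u v = T x y ∨ T u v = T y z ∨ T u v = T z x := by
      intro u v huv hu hv
      simp only [Finset.mem_insert, Finset.mem_singleton] at hu hv
      have := T_comm x y
      have := T_comm y z
      have := T_comm z x
      grind
    have k1 := key a b hab (by simp [← hs']) (by simp [← hs'])
    have k2 := key d e hde (by simp [← hs']) (by simp [← hs'])
    have px : (T a b).perm ((T d e).perm x) = y := by
      rw [← Equiv.Perm.mul_apply, ← mul_perm, he]
      simp [Equiv.swap_apply_of_ne_of_ne hxy hxz]
    -- `c` maps `x` to `y`; the six wrong pairs of factors do not.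
    rcases k1 with k1 | k1 | k1 <;> rcases k2 with k2 | k2 | k2 <;> rw [k1, k2] at px ⊢ <;>
      simp only [T_perm, Equiv.swap_apply_def] at px <;> grind
  · rintro (rfl | rfl | rfl)
    · exact ⟨x, y, y, z, hxy, hyz, rfl, rfl⟩
    · exact ⟨y, z, z, x, hyz, hxz.symm, rfl, T_mul_T_rotate hxy hyz hxz⟩
    · exact ⟨z, x, x, y, hxz.symm, hxy, rfl,
        (T_mul_T_rotate hyz hxz.symm hxy.symm).trans (T_mul_T_rotate hxy hyz hxz)⟩

theorem card_factorizations_two_two {c : PartialPerm n} (h : pCycleType c = {2, 2}) :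
    (factorizations c).card = 2 := by
  classical
  obtain ⟨x, y, z, w, hn, rfl⟩ := (pCycleType_two_two c).1 h
  have n1 : T x y ≠ T z w := T_ne (by grind)
  rw [Finset.card_eq_two]
  refine ⟨(T x y, T z w), (T z w, T x y), by simp [n1], ?_⟩
  ext p
  simp only [mem_factorizations, Finset.mem_insert, Finset.mem_singleton]
  constructor
  · rintro ⟨a, b, d, e, hab, hde, rfl, he⟩
    have hs : ({a, b, d, e} : Finset (Fin n)) = {x, y, z, w} := by
      have := congrArg support he
      simp only [mul_support, T_support, Finset.insert_union, Finset.singleton_union] at this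
      exact this
    -- The four points `a, b, d, e` cover four points, so they are distinct.
    have hn' : [a, b, d, e].Nodup := by
      have h4 : ([a, b, d, e] : List (Fin n)).toFinset = [x, y, z, w].toFinset := by
        simpa using hs
      have h5 := congrArg Finset.card h4
      rw [List.toFinset_card_of_nodup hn] at h5
      exact Multiset.coe_nodup.1 (Multiset.toFinset_card_eq_card_iff_nodup.1 h5)
    -- Hence `c` swaps `a` with `b` and `d` with `e`, which determines the two pairs.
    have pa : (T x y * T z w).perm a = b := by
      rw [← he]
      simp only [mul_perm, T_perm, Equiv.Perm.mul_apply, Equiv.swap_apply_def]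
      grind
    have pd : (T x y * T z w).perm d = e := by
      rw [← he]
      simp only [mul_perm, T_perm, Equiv.Perm.mul_apply, Equiv.swap_apply_def]
      grind
    have key : ∀ u v : Fin n, u ∈ ({x, y, z, w} : Finset (Fin n)) →
        (T x y * T z w).perm u = v → T u v = T x y ∨ T u v = T z w := by
      intro u v hu hv
      simp only [Finset.mem_insert, Finset.mem_singleton] at hu
      simp only [mul_perm, T_perm, Equiv.Perm.mul_apply, Equiv.swap_apply_def] at hv
      have := T_comm x y
      have := T_comm z w
      grind
    have k1 := key a b (by simp [← hs]) pa
    have k2 := key d e (by simp [← hs]) pd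
    have n2 : T a b ≠ T d e := T_ne (by grind)
    grind
  · rintro (rfl | rfl)
    · exact ⟨x, y, z, w, by grind, by grind, rfl, rfl⟩
    · exact ⟨z, w, x, y, by grind, by grind, rfl, T_mul_T_comm hn⟩

theorem card_factorizations (c : PartialPerm n) :
    ((factorizations c).card : ℂ) = (if pCycleType c = {1, 1} then 1 else 0) +
      3 * (if pCycleType c = {3} then 1 else 0) + 2 * (if pCycleType c = {2, 2} then 1 else 0) := by
  have e1 : ({1, 1} : Multiset ℕ) ≠ {3} := by decide
  have e2 : ({1, 1} : Multiset ℕ) ≠ {2, 2} := by decide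
  have e3 : ({3} : Multiset ℕ) ≠ {2, 2} := by decide
  by_cases h1 : pCycleType c = {1, 1}
  · rw [card_factorizations_one_one h1, h1]
    rw [if_pos rfl, if_neg e1, if_neg e2]
    norm_num
  by_cases h3 : pCycleType c = {3}
  · rw [card_factorizations_three h3, h3]
    rw [if_neg e1.symm, if_pos rfl, if_neg e3]
    norm_num
  by_cases h2 : pCycleType c = {2, 2}
  · rw [card_factorizations_two_two h2, h2]
    rw [if_neg e2.symm, if_neg e3.symm, if_pos rfl]
    norm_num
  have h0 : factorizations c = ∅ := by
    refine Finset.eq_empty_of_forall_notMem fun p hp => ?_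
    obtain ⟨a, b, d, e, hab, hde, -, rfl⟩ := mem_factorizations.1 hp
    rcases pCycleType_T_mul_T hab hde with h | h | h
    exacts [h1 h, h3 h, h2 h]
  rw [h0, if_neg h1, if_neg h2, if_neg h3]
  simp

/-! ### The product in the monoid algebra -/

/-- Grouping the expanded product by the value `p * q` leaves the number of factorizations as
the coefficient. -/
theorem A_two_mul_A_two_eq_sum (n : ℕ) :
    A {2} n * A {2} n =
      ∑ c : PartialPerm n, MonoidAlgebra.single c ((factorizations c).card : ℂ) := by
  classical
  have h : A {2} n * A {2} n =
      ∑ p ∈ ({p | pCycleType p.1 = {2} ∧ pCycleType p.2 = {2}} :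
        Finset (PartialPerm n × PartialPerm n)), MonoidAlgebra.single (p.1 * p.2) (1 : ℂ) := by
    rw [A, Fintype.sum_mul_sum, ← Fintype.sum_prod_type', Finset.sum_filter]
    refine Finset.sum_congr rfl fun p _ => ?_
    by_cases h1 : pCycleType p.1 = {2} <;> by_cases h2 : pCycleType p.2 = {2} <;>
      simp [h1, h2, MonoidAlgebra.single_mul_single]
  rw [h]
  refine (Finset.sum_fiberwise' _ (fun p : PartialPerm n × PartialPerm n => p.1 * p.2)
    (fun c => (MonoidAlgebra.single c (1 : ℂ) : MonoidAlgebra ℂ (PartialPerm n)))).symm.trans ?_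
  refine Finset.sum_congr rfl fun c _ => ?_
  rw [Finset.sum_const, Finset.filter_filter, MonoidAlgebra.smul_single, nsmul_one]
  simp only [factorizations]

end PartialPerm

open PartialPerm in
/-- `A_{(2);n} · A_{(2);n} = A_{(1,1);n} + 3·A_{(3);n} + 2·A_{(2,2);n}` in `B_n`, for every `n`. -/
theorem A_two_mul_A_two (n : ℕ) :
    A {2} n * A {2} n = A {1, 1} n + (3 : ℂ) • A {3} n + (2 : ℂ) • A {2, 2} n := by
  rw [A_two_mul_A_two_eq_sum]
  simp only [A, Finset.smul_sum, ← Finset.sum_add_distrib]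
  refine Finset.sum_congr rfl fun c _ => ?_
  rw [card_factorizations]
  simp only [MonoidAlgebra.single_add]
  split_ifs <;> simp
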